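/- Let M₀ = [[A,B],[B*,D]] be a top-dominant block operator matrix satisfying conditions (i)–(iii), with Schur complement S(μ), d = max Spec(D), and let λ_m ∈ (d, λ_e) be an eigenvalue of the closure M. Let b > 0 be such that (0, b] ∩ Spec(S(λ_m)) = ∅, and let (μ_n) be real numbers with 0 ≤ μ_n − λ_m = ε_n → 0. Then for all sufficiently large n: (0, b] ∩ Spec(S(μ_n)) = ∅, and ‖(S(λ_m) − b)^{-1} − (S(μ_n) − b)^{-1}‖ = O(ε_n). -/

import Mathlib

open Filter Topology
open scoped ComplexInnerProductSpace

/-- A (possibly unbounded, densely defined) linear operator from `E` to `F`,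
encoded by its domain together with a total function that is linear on the domain. -/
structure PMap (E F : Type*) [NormedAddCommGroup E] [InnerProductSpace ℂ E]
    [NormedAddCommGroup F] [InnerProductSpace ℂ F] : Type _ where
  dom : Submodule ℂ E
  toFun : E → F
  map_add' : ∀ x ∈ dom, ∀ y ∈ dom, toFun (x + y) = toFun x + toFun y
  map_smul' : ∀ (c : ℂ), ∀ x ∈ dom, toFun (c • x) = c • toFun x

namespace PMap

variable {E F : Type*} [NormedAddCommGroup E] [InnerProductSpace ℂ E]
  [NormedAddCommGroup F] [InnerProductSpace ℂ F]

/-- `T` is self-adjoint : it is densely defined and the adjoint relation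
`⟪T x, y⟫ = ⟪x, z⟫` (for all `x` in the domain) holds iff `y` is in the domain
and `z = T y`. -/
def IsSelfAdjoint (T : PMap E E) : Prop :=
  Dense (T.dom : Set E) ∧
    ∀ y z : E, (∀ x ∈ T.dom, ⟪T.toFun x, y⟫ = ⟪x, z⟫) ↔ y ∈ T.dom ∧ z = T.toFun y

/-- The resolvent set : points `z` where `T - z` has an everywhere defined bounded inverse. -/
def resolventSet (T : PMap E E) : Set ℂ :=
  {z | ∃ R : E →L[ℂ] E, (∀ x ∈ T.dom, R (T.toFun x - z • x) = x) ∧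
      ∀ y : E, R y ∈ T.dom ∧ T.toFun (R y) - z • R y = y}

/-- The spectrum of `T`. -/
def spec (T : PMap E E) : Set ℂ := {z | z ∉ T.resolventSet}

/-- The real points of the spectrum of `T`. -/
def specR (T : PMap E E) : Set ℝ := {t : ℝ | (t : ℂ) ∈ T.spec}

/-- The (real) essential spectrum of `T`, via singular Weyl sequences. -/
def specEssR (T : PMap E E) : Set ℝ :=
  {t : ℝ | ∃ f : ℕ → E, (∀ n, f n ∈ T.dom) ∧ (∀ n, ‖f n‖ = 1) ∧
      (∀ y : E, Tendsto (fun n => ⟪y, f n⟫) atTop (𝓝 0)) ∧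
      Tendsto (fun n => ‖T.toFun (f n) - (t : ℂ) • f n‖) atTop (𝓝 0)}

/-- The eigenspace `ker (T - t)`. -/
def eigSp (T : PMap E E) (t : ℝ) : Submodule ℂ E where
  carrier := {x | x ∈ T.dom ∧ T.toFun x = (t : ℂ) • x}
  add_mem' := by
    rintro a b ⟨ha1, ha2⟩ ⟨hb1, hb2⟩
    exact ⟨T.dom.add_mem ha1 hb1, by rw [T.map_add' a ha1 b hb1, ha2, hb2, smul_add]⟩
  zero_mem' := by
    refine ⟨T.dom.zero_mem, ?_⟩
    have h := T.map_smul' 0 0 T.dom.zero_mem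
    simpa using h
  smul_mem' := by
    rintro c x ⟨hx1, hx2⟩
    refine ⟨T.dom.smul_mem c hx1, ?_⟩
    rw [T.map_smul' c x hx1, hx2]
    exact smul_comm c ((t : ℂ)) x

/-- The distance from `u` to the set `L` in the graph norm of `T`. -/
noncomputable def gdist (T : PMap E E) (u : E) (L : Set E) : ℝ :=
  sInf {r | ∃ v ∈ L, r = Real.sqrt (‖u - v‖ ^ 2 + ‖T.toFun u - T.toFun v‖ ^ 2)}

end PMap

/-- The Schur form `s(μ)[x,y] = 𝔞[x,y] − μ⟨x,y⟩ − ⟨(D−μ)⁻¹ B*x, B*y⟩`, where `fa` is the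
closed form of `A`, `Bs = B*`, and `RD μ = (D−μ)⁻¹` is the resolvent of `D`. -/
noncomputable def schurForm {H1 H2 : Type*} [NormedAddCommGroup H1] [InnerProductSpace ℂ H1]
    [NormedAddCommGroup H2] [InnerProductSpace ℂ H2]
    (fa : H1 → H1 → ℂ) (Bs : PMap H1 H2) (RD : ℂ → (H2 →L[ℂ] H2)) (μ : ℂ) (x y : H1) : ℂ :=
  fa x y - μ * ⟪x, y⟫ - ⟪RD μ (Bs.toFun x), Bs.toFun y⟫

/-- `R` is the (everywhere defined, bounded) resolvent `(T − b)⁻¹` of `T` at `b`. -/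
def IsResolventAt {H1 : Type*} [NormedAddCommGroup H1] [InnerProductSpace ℂ H1]
    (T : PMap H1 H1) (b : ℝ) (R : H1 →L[ℂ] H1) : Prop :=
  (∀ x ∈ T.dom, R (T.toFun x - (b : ℂ) • x) = x) ∧
    ∀ y : H1, R y ∈ T.dom ∧ T.toFun (R y) - (b : ℂ) • R y = y

section helpers
variable {H : Type*} [NormedAddCommGroup H] [InnerProductSpace ℂ H] [CompleteSpace H]

/-- A bounded symmetric operator which is bounded below has a bounded inverse. -/
theorem exists_inv_of_bddBelow (T : H →L[ℂ] H) (hT : ∀ x y, ⟪T x, y⟫ = ⟪x, T y⟫)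
    (c : ℝ) (hc : 0 < c) (h : ∀ x, c * ‖x‖ ≤ ‖T x‖) :
    ∃ X : H →L[ℂ] H, (∀ x, T (X x) = x) ∧ (∀ x, X (T x) = x) ∧ ‖X‖ ≤ c⁻¹ := by
  have hanti : AntilipschitzWith (Real.toNNReal c⁻¹) T := by
    apply AddMonoidHomClass.antilipschitz_of_bound
    intro x
    rw [Real.coe_toNNReal _ (by positivity)]
    rw [inv_mul_eq_div, le_div_iff₀ hc]
    linarith [h x]
  have hb : Function.Bijective T := by
    rw [ContinuousLinearMap.bijective_iff_dense_range_and_antilipschitz]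
    refine ⟨?_, _, hanti⟩
    rw [Submodule.topologicalClosure_eq_top_iff, Submodule.eq_bot_iff]
    intro y hy
    rw [Submodule.mem_orthogonal] at hy
    have h0 : T y = 0 := by
      have h1 := hy (T (T y)) ⟨T y, rfl⟩
      rw [hT] at h1
      exact inner_self_eq_zero.1 h1
    have := h y
    rw [h0, norm_zero] at this
    have h2 : ‖y‖ ≤ 0 := by nlinarith [norm_nonneg y]
    simpa using h2
  have hu := ContinuousLinearMap.isUnit_iff_bijective.2 hb
  obtain ⟨u, hu⟩ := hu
  have e1 : ∀ x, T ((↑u⁻¹ : H →L[ℂ] H) x) = x := by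
    intro x
    have := u.mul_inv
    rw [hu] at this
    exact congrArg (fun f : H →L[ℂ] H => f x) this
  have e2 : ∀ x, (↑u⁻¹ : H →L[ℂ] H) (T x) = x := by
    intro x
    have := u.inv_mul
    rw [hu] at this
    exact congrArg (fun f : H →L[ℂ] H => f x) this
  refine ⟨↑u⁻¹, e1, e2, ?_⟩
  apply ContinuousLinearMap.opNorm_le_bound _ (by positivity)
  intro x
  have := h ((↑u⁻¹ : H →L[ℂ] H) x)
  rw [e1] at this
  rw [inv_mul_eq_div, le_div_iff₀ hc]
  linarith

/-- The spectral partial inverse on the negative part. -/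
theorem exists_gamma (R : H →L[ℂ] H) (hR : ∀ x y, ⟪R x, y⟫ = ⟪x, R y⟫)
    (b m : ℝ) (hb : 0 < b) (hm : 0 < m)
    (hs : ∀ r ∈ spectrum ℝ R, r < 0 → -b⁻¹ ≤ r ∧ r ≤ -m⁻¹) :
    ∃ (Γ : H →L[ℂ] H) (δ : ℝ), 0 < δ ∧ (∀ x y, ⟪Γ x, y⟫ = ⟪x, Γ y⟫) ∧
      (∀ x, Γ (R x) = R (Γ x)) ∧ (∀ x, Γ (R (Γ x)) = Γ x) ∧
      (∀ x, (⟪Γ x, x⟫ : ℂ).re ≤ -b * ‖R (Γ x)‖ ^ 2) ∧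
      (∀ v, δ * ‖R (v - R (Γ v))‖ ^ 2 ≤ (⟪v - R (Γ v), R (v - R (Γ v))⟫ : ℂ).re) := by
  have hsa : _root_.IsSelfAdjoint R :=
    ContinuousLinearMap.isSelfAdjoint_iff_isSymmetric.2 (fun x y => hR x y)
  have hm' : 0 < m⁻¹ := inv_pos.2 hm
  set g : ℝ → ℝ := fun r => min 0 r / max (r ^ 2) (m⁻¹ ^ 2) with hg
  have hgpos : ∀ r : ℝ, max (r ^ 2) (m⁻¹ ^ 2) ≠ 0 := fun r =>
    (lt_of_lt_of_le (by positivity) (le_max_right _ _)).ne'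
  have hgc : Continuous g := by
    apply Continuous.div (by fun_prop) (by fun_prop) hgpos
  have hgneg : ∀ r ∈ spectrum ℝ R, r < 0 → g r = r⁻¹ := by
    intro r hr h0
    have h1 := (hs r hr h0).2
    have h2 : m⁻¹ ^ 2 ≤ r ^ 2 := by nlinarith
    simp only [hg]
    rw [min_eq_right h0.le, max_eq_left h2]
    field_simp
  have hgnn : ∀ r : ℝ, 0 ≤ r → g r = 0 := by
    intro r h0
    simp only [hg]
    rw [min_eq_left h0, zero_div]
  set Γ : H →L[ℂ] H := cfc g R with hΓ
  have hΓsa : _root_.IsSelfAdjoint Γ := cfc_predicate g R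
  have hΓs : ∀ x y, ⟪Γ x, y⟫ = ⟪x, Γ y⟫ := fun x y =>
    ContinuousLinearMap.isSelfAdjoint_iff_isSymmetric.1 hΓsa x y
  have hcid : R = cfc (fun r : ℝ => r) R := (cfc_id' ℝ R).symm
  have hcomm : Γ * R = R * Γ := by
    conv_lhs => rw [hcid]
    conv_rhs => rw [hcid]
    exact cfc_commute_cfc _ _ _
  have hcommx : ∀ x, Γ (R x) = R (Γ x) := fun x =>
    congrArg (fun f : H →L[ℂ] H => f x) hcomm
  have hRΓ : R * Γ = cfc (fun r => r * g r) R := by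
    rw [cfc_mul (fun r : ℝ => r) g R (by fun_prop) hgc.continuousOn, ← hcid]
  have hidem : Γ * (R * Γ) = Γ := by
    rw [hRΓ, hΓ, ← cfc_mul g (fun r => r * g r) R hgc.continuousOn
      ((continuous_id.mul hgc).continuousOn)]
    apply cfc_congr
    intro r hr
    rcases lt_or_ge r 0 with h0 | h0
    · simp only [hgneg r hr h0]; field_simp
    · simp [hgnn r h0]
  have hidemx : ∀ x, Γ (R (Γ x)) = Γ x := fun x =>
    congrArg (fun f : H →L[ℂ] H => f x) hidem
  -- spectrum bound
  refine ⟨Γ, (‖R‖ + 1)⁻¹, by positivity, hΓs, hcommx, hidemx, ?_, ?_⟩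
  · intro x
    have hle : 0 ≤ cfc (fun r => -(g r) - b * (r * g r)) R := by
      apply cfc_nonneg
      intro r hr
      rcases lt_or_ge r 0 with h0 | h0
      · have h1 := (hs r hr h0).1
        rw [hgneg r hr h0, mul_inv_cancel₀ h0.ne]
        have h3 : (-r)⁻¹ ≥ b := by
          rw [ge_iff_le, le_inv_comm₀ hb (by linarith)]; linarith
        rw [inv_neg] at h3
        linarith
      · simp [hgnn r h0]
    have heq : cfc (fun r => -(g r) - b * (r * g r)) R = -Γ - b • (R * Γ) := by
      rw [cfc_sub (fun r => -(g r)) (fun r => b * (r * g r)) R (hgc.neg.continuousOn)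
        ((continuous_const.mul (continuous_id.mul hgc)).continuousOn), cfc_neg, hRΓ,
        cfc_const_mul b (fun r => r * g r) R ((continuous_id.mul hgc).continuousOn)]
    rw [heq, ContinuousLinearMap.nonneg_iff_isPositive] at hle
    have h1 := hle.re_inner_nonneg_left x
    have h2 : (⟪R (Γ x), x⟫ : ℂ) = ⟪R (Γ x), R (Γ x)⟫ := by
      rw [hR (Γ x) (R (Γ x)), hΓs x, hcommx, hidemx, hR, hΓs, hcommx]
    have h3 : (⟪R (Γ x), R (Γ x)⟫ : ℂ).re = ‖R (Γ x)‖ ^ 2 :=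
      (norm_sq_eq_re_inner (𝕜 := ℂ) (R (Γ x))).symm
    have h4 : (⟪(-Γ - b • (R * Γ)) x, x⟫ : ℂ).re
        = -(⟪Γ x, x⟫ : ℂ).re - b * (⟪R (Γ x), x⟫ : ℂ).re := by
      have : (-Γ - b • (R * Γ)) x = -(Γ x) - (b : ℂ) • R (Γ x) := by
        simp
      rw [this, inner_sub_left, inner_neg_left, inner_smul_left]
      simp
    rw [h2, h3] at h4
    have h5 : 0 ≤ (⟪(-Γ - b • (R * Γ)) x, x⟫ : ℂ).re := h1
    linarith
  · intro v
    have hle : 0 ≤ cfc (fun r => (r - (‖R‖ + 1)⁻¹ * (r * r)) * (1 - r * g r)) R := by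
      apply cfc_nonneg
      intro r hr
      rcases lt_or_ge r 0 with h0 | h0
      · rw [hgneg r hr h0, mul_inv_cancel₀ h0.ne]; simp
      · rw [hgnn r h0]
        have h1 : r ≤ ‖R‖ + 1 := by
          have hn : ‖r‖ ≤ ‖R‖ * ‖(1 : H →L[ℂ] H)‖ := spectrum.norm_le_norm_mul_of_mem hr
          have hone : ‖(1 : H →L[ℂ] H)‖ ≤ 1 := ContinuousLinearMap.norm_id_le
          have := le_abs_self r
          rw [Real.norm_eq_abs] at hn
          nlinarith [norm_nonneg R]
        have h2 : (‖R‖ + 1)⁻¹ * r ≤ 1 := by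
          rw [inv_mul_le_iff₀ (by positivity)]; linarith
        nlinarith
    have heq : cfc (fun r => (r - (‖R‖ + 1)⁻¹ * (r * r)) * (1 - r * g r)) R
        = (R - (‖R‖ + 1)⁻¹ • (R * R)) * (1 - R * Γ) := by
      rw [cfc_mul (fun r => (r - (‖R‖ + 1)⁻¹ * (r * r))) (fun r => 1 - r * g r) R
        (by fun_prop) ((continuous_const.sub (continuous_id.mul hgc)).continuousOn),
        cfc_sub (fun r : ℝ => r) (fun r => (‖R‖ + 1)⁻¹ * (r * r)) R
        (by fun_prop) (by fun_prop), ← hcid,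
        cfc_const_mul _ (fun r : ℝ => r * r) R (by fun_prop),
        cfc_mul (fun r : ℝ => r) (fun r : ℝ => r) R (by fun_prop) (by fun_prop), ← hcid,
        cfc_sub (fun r : ℝ => 1) (fun r => r * g r) R (by fun_prop)
        ((continuous_id.mul hgc).continuousOn), ← hRΓ, cfc_const_one ℝ R]
    rw [heq, ContinuousLinearMap.nonneg_iff_isPositive] at hle
    set z := v - R (Γ v) with hz
    have h1 := hle.re_inner_nonneg_left z
    have hΓz : Γ z = 0 := by rw [hz, map_sub, hidemx, sub_self]
    have h4 : (⟪((R - (‖R‖ + 1)⁻¹ • (R * R)) * (1 - R * Γ)) z, z⟫ : ℂ).re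
        = (⟪z, R z⟫ : ℂ).re - (‖R‖ + 1)⁻¹ * ‖R z‖ ^ 2 := by
      have : ((R - (‖R‖ + 1)⁻¹ • (R * R)) * (1 - R * Γ)) z
          = R z - (((‖R‖ + 1)⁻¹ : ℝ) : ℂ) • R (R z) := by
        rw [Complex.coe_smul]
        simp [hΓz]
      rw [this, inner_sub_left, inner_smul_left, hR (R z) z, hR z z, Complex.conj_ofReal,
        Complex.sub_re, Complex.re_ofReal_mul, inner_self_eq_norm_sq_to_K]
      norm_cast
    have h5 : 0 ≤ (⟪((R - (‖R‖ + 1)⁻¹ • (R * R)) * (1 - R * Γ)) z, z⟫ : ℂ).re := h1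
    linarith

/-- Spectral splitting of the bounded form operator `T`. -/
theorem splitting (W T X Γ : H →L[ℂ] H) (hW : ∀ x y, ⟪W x, y⟫ = ⟪x, W y⟫)
    (hWd : DenseRange W)
    (hTX : ∀ x, T (X x) = x) (hXT : ∀ x, X (T x) = x)
    (b m δ : ℝ) (hm : 0 ≤ m) (hδ : 0 < δ)
    (hTm : ∀ x, ‖x‖ ^ 2 - m * ‖W x‖ ^ 2 ≤ (⟪T x, x⟫ : ℂ).re)
    (hΓR : ∀ x, Γ (W (X (W (Γ x)))) = Γ x)
    (hΓb : ∀ x, (⟪Γ x, x⟫ : ℂ).re ≤ -b * ‖W (X (W (Γ x)))‖ ^ 2)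
    (hΓs : ∀ x y, ⟪Γ x, y⟫ = ⟪x, Γ y⟫)
    (hΓc : ∀ x, Γ (W (X (W x))) = W (X (W (Γ x))))
    (hΓδ : ∀ v, δ * ‖W (X (W (v - W (X (W (Γ v))))))‖ ^ 2
      ≤ (⟪v - W (X (W (Γ v))), W (X (W (v - W (X (W (Γ v))))))⟫ : ℂ).re) :
    ∃ (P : H →L[ℂ] H) (κ C : ℝ), 0 < κ ∧ 0 < C ∧
      (∀ ξ, κ * ‖ξ - P ξ‖ ^ 2 ≤ (⟪T (ξ - P ξ), ξ - P ξ⟫ : ℂ).re) ∧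
      (∀ ξ, (⟪T (P ξ), P ξ⟫ : ℂ).re ≤ -b * ‖W (P ξ)‖ ^ 2) ∧
      (∀ ξ, ‖P ξ‖ ≤ C * ‖W (P ξ)‖) := by
  set P : H →L[ℂ] H := X ∘L W ∘L Γ ∘L W with hP
  have hPx : ∀ ξ, P ξ = X (W (Γ (W ξ))) := fun ξ => rfl
  refine ⟨P, δ / (δ + m), ‖X ∘L W ∘L Γ‖ + 1, by positivity, by positivity, ?_, ?_, ?_⟩
  · intro ξ
    have key : ∀ ξ, δ * ‖W (ξ - P ξ)‖ ^ 2 ≤ (⟪T (ξ - P ξ), ξ - P ξ⟫ : ℂ).re := by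
      have hd : DenseRange (fun v => X (W v)) := by
        have hXs : Function.Surjective X := fun x => ⟨T x, hXT x⟩
        exact hXs.denseRange.comp hWd X.continuous
      refine fun ξ => hd.induction_on ξ ?_ ?_
      · apply isClosed_le
        · fun_prop
        · exact Complex.continuous_re.comp (Continuous.inner (by fun_prop) (by fun_prop))
      · intro v
        have h1 : X (W v) - P (X (W v)) = X (W (v - W (X (W (Γ v))))) := by
          rw [hPx, hΓc]; simp
        simp only [h1]
        rw [hTX, hW]
        exact hΓδ v
    have h1 := key ξ
    have h2 := hTm (ξ - P ξ)
    rw [div_mul_eq_mul_div, div_le_iff₀ (by positivity)]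
    nlinarith
  · intro ξ
    have h1 : T (P ξ) = W (Γ (W ξ)) := by rw [hPx, hTX]
    have h2 : W (P ξ) = W (X (W (Γ (W ξ)))) := by rw [hPx]
    rw [h1, hW, h2, hΓs, hΓR, ← hΓs]
    exact hΓb _
  · intro ξ
    have h1 : P ξ = (X ∘L W ∘L Γ) (W (P ξ)) := by
      simp only [ContinuousLinearMap.comp_apply, hPx, hΓR]
    have h2 := (X ∘L W ∘L Γ).le_opNorm (W (P ξ))
    rw [← h1] at h2
    nlinarith [norm_nonneg (W (P ξ))]

/-- Uniform lower bounds for perturbations. -/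
theorem perturbed_bddBelow (W T P : H →L[ℂ] H) (hW : ∀ x y, ⟪W x, y⟫ = ⟪x, W y⟫)
    (b κ C : ℝ) (hκ : 0 < κ) (hC : 0 < C)
    (h1 : ∀ ξ, κ * ‖ξ - P ξ‖ ^ 2 ≤ (⟪T (ξ - P ξ), ξ - P ξ⟫ : ℂ).re)
    (h2 : ∀ ξ, (⟪T (P ξ), P ξ⟫ : ℂ).re ≤ -b * ‖W (P ξ)‖ ^ 2)
    (h3 : ∀ ξ, ‖P ξ‖ ≤ C * ‖W (P ξ)‖) (t : ℝ) (ht : 0 < t) (htb : t ≤ b) :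
    ∃ c : ℝ, 0 < c ∧ ∀ (L T' : H →L[ℂ] H) (e ℓ : ℝ), 0 ≤ e → e * ℓ ≤ κ / 2 → ‖L‖ ≤ ℓ →
      (∀ x, 0 ≤ (⟪L x, x⟫ : ℂ).re) →
      (∀ x y, ⟪T' x, y⟫ = ⟪x, T' y⟫) →
      (∀ x, T' x = T x + ((b - t : ℝ) : ℂ) • W (W x) - (e : ℂ) • L x) →
      ∀ ξ, c * ‖ξ‖ ≤ ‖T' ξ‖ := by
  set c0 : ℝ := min (κ / 2) (t / C ^ 2) with hc0
  have hc0p : 0 < c0 := lt_min (by positivity) (by positivity)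
  set q : ℝ := 1 + 2 * ‖P‖ with hq
  have hqp : 0 < q := by positivity
  refine ⟨c0 / 2 / q, by positivity, ?_⟩
  intro L T' e ℓ he heℓ hL hLp hT' hform ξ
  set p := P ξ with hp
  set z := ξ - p with hz
  have hex : ∀ x, (⟪T' x, x⟫ : ℂ).re = (⟪T x, x⟫ : ℂ).re + (b - t) * ‖W x‖ ^ 2
      - e * (⟪L x, x⟫ : ℂ).re := by
    intro x
    rw [hform, inner_sub_left, inner_add_left, inner_smul_left, inner_smul_left, hW (W x) x,
      Complex.conj_ofReal, Complex.conj_ofReal, Complex.sub_re, Complex.add_re,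
      Complex.re_ofReal_mul, Complex.re_ofReal_mul, inner_self_eq_norm_sq_to_K]
    norm_cast
  have hLz : (⟪L z, z⟫ : ℂ).re ≤ ℓ * ‖z‖ ^ 2 := by
    have a1 := (Complex.re_le_norm _).trans (norm_inner_le_norm (𝕜 := ℂ) (L z) z)
    have a2 := L.le_opNorm z
    nlinarith [norm_nonneg z, norm_nonneg (L z), mul_nonneg (norm_nonneg z) (norm_nonneg z)]
  have hz1 : c0 * ‖z‖ ^ 2 ≤ (⟪T' z, z⟫ : ℂ).re := by
    rw [hex]
    have a1 := h1 ξ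
    have a2 : c0 ≤ κ / 2 := min_le_left _ _
    have a3 : e * (⟪L z, z⟫ : ℂ).re ≤ κ / 2 * ‖z‖ ^ 2 := by
      calc e * (⟪L z, z⟫ : ℂ).re ≤ e * (ℓ * ‖z‖ ^ 2) := by gcongr
        _ = e * ℓ * ‖z‖ ^ 2 := by ring
        _ ≤ _ := by gcongr
    have a4 : 0 ≤ (b - t) * ‖W z‖ ^ 2 := mul_nonneg (by linarith) (by positivity)
    have a5 : c0 * ‖z‖ ^ 2 ≤ κ / 2 * ‖z‖ ^ 2 := by gcongr
    linarith
  have hp1 : c0 * ‖p‖ ^ 2 ≤ -(⟪T' p, p⟫ : ℂ).re := by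
    rw [hex]
    have a1 := h2 ξ
    have a2 := h3 ξ
    have a3 : ‖p‖ ^ 2 ≤ C ^ 2 * ‖W p‖ ^ 2 := by
      rw [← mul_pow]; gcongr
    have a4 : c0 ≤ t / C ^ 2 := min_le_right _ _
    have a5 : c0 * ‖p‖ ^ 2 ≤ t * ‖W p‖ ^ 2 := by
      calc c0 * ‖p‖ ^ 2 ≤ t / C ^ 2 * (C ^ 2 * ‖W p‖ ^ 2) := by gcongr
        _ = _ := by field_simp
    have a6 := mul_nonneg he (hLp p)
    linarith
  have hξ : ξ = z + p := by rw [hz]; abel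
  have hmain : (⟪T' ξ, z - p⟫ : ℂ).re = (⟪T' z, z⟫ : ℂ).re - (⟪T' p, p⟫ : ℂ).re := by
    have a1 : (⟪T' z, p⟫ : ℂ).re = (⟪T' p, z⟫ : ℂ).re := by
      rw [hT' z p, ← inner_conj_symm, Complex.conj_re]
    have a2 : T' ξ = T' z + T' p := by
      conv_lhs => rw [hξ, map_add]
    rw [a2, inner_add_left, inner_sub_right (T' z) z p, inner_sub_right (T' p) z p]
    simp only [Complex.add_re, Complex.sub_re]
    linarith
  have hup : (⟪T' ξ, z - p⟫ : ℂ).re ≤ ‖T' ξ‖ * (q * ‖ξ‖) := by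
    have a1 := (Complex.re_le_norm _).trans (norm_inner_le_norm (𝕜 := ℂ) (T' ξ) (z - p))
    have a2 : ‖z - p‖ ≤ q * ‖ξ‖ := by
      have b1 : z - p = ξ - (2 : ℂ) • P ξ := by rw [hz, hp, two_smul]; abel
      rw [b1]
      have b2 := norm_sub_le ξ ((2 : ℂ) • P ξ)
      rw [norm_smul] at b2
      have b3 := P.le_opNorm ξ
      simp at b2
      rw [hq]; nlinarith
    exact a1.trans (by gcongr)
  have hn : ‖ξ‖ ^ 2 ≤ 2 * (‖z‖ ^ 2 + ‖p‖ ^ 2) := by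
    have b1 : ‖ξ‖ ≤ ‖z‖ + ‖p‖ := by
      conv_lhs => rw [hξ]
      exact norm_add_le _ _
    nlinarith [norm_nonneg ξ, sq_nonneg (‖z‖ - ‖p‖), norm_nonneg z, norm_nonneg p]
  have hfin : c0 / 2 * ‖ξ‖ ^ 2 ≤ ‖T' ξ‖ * (q * ‖ξ‖) := by
    nlinarith
  rcases eq_or_lt_of_le (norm_nonneg ξ) with h0 | h0
  · rw [← h0]; simp
  · rw [div_mul_eq_mul_div, div_le_iff₀ hqp]
    have : c0 / 2 * ‖ξ‖ * ‖ξ‖ ≤ ‖T' ξ‖ * q * ‖ξ‖ := by nlinarith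
    exact le_of_mul_le_mul_right this h0

theorem IsResolventAt.unique' {S : PMap H H} {t : ℝ} {R R' : H →L[ℂ] H}
    (h : IsResolventAt S t R) (h' : IsResolventAt S t R') : R = R' := by
  ext y
  have h1 := h.1 (R' y) (h'.2 y).1
  rw [(h'.2 y).2] at h1
  exact h1

/-- Resolvent identity, pointwise. -/
theorem IsResolventAt.identity {S : PMap H H} {s t : ℝ} {R R' : H →L[ℂ] H}
    (h : IsResolventAt S s R) (h' : IsResolventAt S t R') (y : H) :
    R' y = R y + ((t - s : ℝ) : ℂ) • R (R' y) := by
  have h1 := h.1 (R' y) (h'.2 y).1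
  have h2 : S.toFun (R' y) - (s : ℂ) • R' y = y + ((t - s : ℝ) : ℂ) • R' y := by
    have := (h'.2 y).2
    rw [sub_eq_iff_eq_add] at this
    rw [this]; push_cast; module
  rw [h2, map_add, map_smul] at h1
  exact h1.symm

theorem isResolventAt_of_inv (W T X : H →L[ℂ] H) (hW : ∀ x y, ⟪W x, y⟫ = ⟪x, W y⟫)
    (hT : ∀ x y, ⟪T x, y⟫ = ⟪x, T y⟫)
    (hTX : ∀ x, T (X x) = x) (hXT : ∀ x, X (T x) = x) (S : PMap H H) (hS : S.IsSelfAdjoint)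
    (t : ℝ) (hlink : ∀ x ∈ S.dom, ∃ ξ, x = W ξ ∧ T ξ = W (S.toFun x - (t : ℂ) • x)) :
    IsResolventAt S t (W ∘L X ∘L W) := by
  constructor
  · intro x hx
    obtain ⟨ξ, h1, h2⟩ := hlink x hx
    simp only [ContinuousLinearMap.comp_apply]
    rw [← h2, hXT, ← h1]
  · intro y
    simp only [ContinuousLinearMap.comp_apply]
    set ξ := X (W y) with hξ
    have hTξ : T ξ = W y := hTX _
    have h := (hS.2 (W ξ) (y + (t : ℂ) • W ξ)).1 (by
      intro x hx
      obtain ⟨η, h1, h2⟩ := hlink x hx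
      have h3 : (⟪S.toFun x - (t : ℂ) • x, W ξ⟫ : ℂ) = ⟪x, y⟫ := by
        rw [← hW, ← h2, hT, hTξ, ← hW, ← h1]
      rw [inner_sub_left, inner_smul_left, Complex.conj_ofReal] at h3
      rw [inner_add_right, inner_smul_right, ← h3]
      ring)
    refine ⟨h.1, ?_⟩
    rw [← h.2]; abel

theorem abstract_main (W : H →L[ℂ] H) (hW : ∀ x y, ⟪W x, y⟫ = ⟪x, W y⟫) (hWd : DenseRange W)
    (S : ℝ → PMap H H) (T : ℝ → ℝ → H →L[ℂ] H) (L : ℝ → H →L[ℂ] H) (l b ℓ ν : ℝ)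
    (hb : 0 < b) (hℓ : 0 ≤ ℓ)
    (hS : ∀ μ, l ≤ μ → (S μ).IsSelfAdjoint)
    (hT : ∀ μ, l ≤ μ → ∀ t x y, ⟪T μ t x, y⟫ = ⟪x, T μ t y⟫)
    (hlink : ∀ μ, l ≤ μ → ∀ t : ℝ, ∀ x ∈ (S μ).dom,
      ∃ ξ, x = W ξ ∧ T μ t ξ = W ((S μ).toFun x - (t : ℂ) • x))
    (hpert : ∀ μ, l ≤ μ → ∀ s t : ℝ, ∀ x,
      T μ t x = T l s x + ((s - t : ℝ) : ℂ) • W (W x) - ((μ - l : ℝ) : ℂ) • L μ x)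
    (hLpos : ∀ μ, l ≤ μ → ∀ x, 0 ≤ (⟪L μ x, x⟫ : ℂ).re)
    (hLnorm : ∀ μ, l ≤ μ → ‖L μ‖ ≤ ℓ)
    (hlow : ∀ (t : ℝ) x, ‖x‖ ^ 2 + (ν - t) * ‖W x‖ ^ 2 ≤ (⟪T l t x, x⟫ : ℂ).re)
    (hbspec : Set.Ioc 0 b ∩ (S l).specR = ∅) :
    ∃ e0 > 0, ∃ C : ℝ, ∀ μ, l ≤ μ → μ - l ≤ e0 →
      Set.Ioc 0 b ∩ (S μ).specR = ∅ ∧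
      ∀ R1 R2 : H →L[ℂ] H, IsResolventAt (S l) b R1 → IsResolventAt (S μ) b R2 →
        ‖R1 - R2‖ ≤ C * (μ - l) := by
  have hres : ∀ t : ℝ, 0 < t → t ≤ b → ∃ R, IsResolventAt (S l) t R := by
    intro t h0 h1
    by_contra hcon
    have hmem : t ∈ Set.Ioc 0 b ∩ (S l).specR := ⟨⟨h0, h1⟩, hcon⟩
    rw [hbspec] at hmem
    exact hmem
  -- points below `ν` are in the resolvent set
  have hbelow : ∀ t : ℝ, t ≤ ν → ∃ X : H →L[ℂ] H, (∀ x, T l t (X x) = x) ∧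
      IsResolventAt (S l) t (W ∘L X ∘L W) := by
    intro t ht
    obtain ⟨X, hX1, hX2, -⟩ := exists_inv_of_bddBelow (T l t) (hT l le_rfl t) 1 one_pos (by
      intro x
      have h1 := hlow t x
      have h2 := (Complex.re_le_norm _).trans (norm_inner_le_norm (𝕜 := ℂ) (T l t x) x)
      have h3 : 0 ≤ (ν - t) * ‖W x‖ ^ 2 := mul_nonneg (by linarith) (by positivity)
      rcases eq_or_lt_of_le (norm_nonneg x) with h0 | h0
      · rw [← h0]; simp
      · have h4 : ‖x‖ * ‖x‖ ≤ ‖T l t x‖ * ‖x‖ := by nlinarith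
        have := le_of_mul_le_mul_right h4 h0
        linarith)
    exact ⟨X, hX1, isResolventAt_of_inv W (T l t) X hW (hT l le_rfl t) hX1 hX2 (S l)
      (hS l le_rfl) t (hlink l le_rfl t)⟩
  obtain ⟨R, hR⟩ := hres b hb le_rfl
  set t0 := min ν (b - 1) with ht0
  have ht0ν : t0 ≤ ν := min_le_left _ _
  have ht0b : t0 ≤ b - 1 := min_le_right _ _
  obtain ⟨X0, hX0, hR0⟩ := hbelow t0 ht0ν
  have hself : ∀ s t : ℝ, ∀ x, T l t x = T l s x + ((s - t : ℝ) : ℂ) • W (W x) := by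
    intro s t x
    have := hpert l le_rfl s t x
    simpa using this
  set β : ℂ := ((b - t0 : ℝ) : ℂ) with hβ
  have hRR0 : ∀ v, W (X0 (W (v + β • R v))) = R v := by
    intro v
    have := hR0.identity hR v
    simp only [ContinuousLinearMap.comp_apply] at this
    rw [map_add, map_smul, map_add, map_smul, map_add, map_smul]
    exact this.symm
  set X : H →L[ℂ] H := X0 + β • (X0 ∘L W ∘L (ContinuousLinearMap.id ℂ H + β • R) ∘L W ∘L X0)
    with hXdef
  have hXx : ∀ y, X y = X0 y + β • X0 (W (W (X0 y) + β • R (W (X0 y)))) := by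
    intro y; simp [hXdef]
  have hTX : ∀ y, T l b (X y) = y := by
    intro y
    rw [hself t0 b, hXx]
    have hneg : ((t0 - b : ℝ) : ℂ) = -β := by rw [hβ]; push_cast; ring
    simp only [hneg, map_add (T l t0), map_smul (T l t0), hX0, map_add W (X0 y) (β • _),
      map_smul W, hRR0]
    simp only [map_add, map_smul]
    module
  have hTs := hT l le_rfl b
  have hinj : ∀ x, T l b x = 0 → x = 0 := by
    intro x hx
    have h1 : (⟪x, x⟫ : ℂ) = 0 := by
      have h2 : (⟪T l b (X x), x⟫ : ℂ) = 0 := by rw [hTs, hx, inner_zero_right]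
      rwa [hTX] at h2
    exact inner_self_eq_zero.1 h1
  have hXT : ∀ x, X (T l b x) = x := by
    intro x
    have : T l b (X (T l b x) - x) = 0 := by rw [map_sub, hTX, sub_self]
    exact sub_eq_zero.1 (hinj _ this)
  have hRX : R = W ∘L X ∘L W := hR.unique'
    (isResolventAt_of_inv W (T l b) X hW hTs hTX hXT (S l) (hS l le_rfl) b (hlink l le_rfl b))
  have hRXx : ∀ x, R x = W (X (W x)) := by intro x; rw [hRX]; rfl
  have hRs : ∀ x y, ⟪R x, y⟫ = ⟪x, R y⟫ := by
    intro x y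
    rw [hRXx, hRXx, hW]
    conv_lhs => rw [← hTX (W y)]
    rw [← hTs, hTX, hW]
  -- spectrum of `R`
  have hspec : ∀ (r t : ℝ), r ≠ 0 → t = b + r⁻¹ → (∃ Rt, IsResolventAt (S l) t Rt) →
      r ∉ spectrum ℝ R := by
    rintro r t hr0 ht ⟨Rt, hRt⟩
    rw [spectrum.notMem_iff]
    have hid1 := hR.identity hRt
    have hid2 := hRt.identity hR
    have hs : ((t - b : ℝ) : ℂ) = (r : ℂ)⁻¹ := by rw [ht]; push_cast; ring
    have hs' : ((b - t : ℝ) : ℂ) = -(r : ℂ)⁻¹ := by rw [ht]; push_cast; ring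
    have hrC : (r : ℂ) ≠ 0 := by exact_mod_cast hr0
    rw [hs] at hid1
    rw [hs'] at hid2
    set Z : H →L[ℂ] H := (r : ℂ)⁻¹ • (1 + (r : ℂ)⁻¹ • Rt) with hZ
    have hal : ∀ x, (algebraMap ℝ (H →L[ℂ] H) r - R) x = (r : ℂ) • x - R x := by
      intro x
      simp [Algebra.algebraMap_eq_smul_one]
    have e1 : (algebraMap ℝ (H →L[ℂ] H) r - R) * Z = 1 := by
      ext y
      rw [ContinuousLinearMap.mul_apply, hal]
      simp only [hZ, ContinuousLinearMap.smul_apply, ContinuousLinearMap.add_apply,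
        ContinuousLinearMap.one_apply, map_smul, map_add]
      have h1 := hid1 y
      generalize R (Rt y) = q at *
      rw [h1]
      match_scalars <;> field_simp <;> ring
    have e2 : Z * (algebraMap ℝ (H →L[ℂ] H) r - R) = 1 := by
      ext y
      rw [ContinuousLinearMap.mul_apply, hal]
      simp only [hZ, ContinuousLinearMap.smul_apply, ContinuousLinearMap.add_apply,
        ContinuousLinearMap.one_apply, map_smul, map_sub]
      have h1 := hid2 y
      generalize Rt (R y) = q at *
      rw [h1]
      match_scalars <;> field_simp <;> ring
    exact ⟨⟨_, Z, e1, e2⟩, rfl⟩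
  set m : ℝ := b - t0 with hm
  have hmpos : 0 < m := by linarith
  have hspecR : ∀ r ∈ spectrum ℝ R, r < 0 → -b⁻¹ ≤ r ∧ r ≤ -m⁻¹ := by
    intro r hr h0
    constructor
    · by_contra hlt
      push Not at hlt
      refine hspec r (b + r⁻¹) h0.ne rfl (hres _ ?_ ?_) hr
      · have : (-r)⁻¹ < b := by
          rw [inv_lt_comm₀ (by linarith) hb]; linarith
        rw [inv_neg] at this
        linarith
      · have := inv_lt_zero.2 h0
        linarith
    · by_contra hlt
      push Not at hlt
      refine hspec r (b + r⁻¹) h0.ne rfl ?_ hr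
      obtain ⟨X1, -, h1⟩ := hbelow (b + r⁻¹) (by
        have : m < (-r)⁻¹ := by
          rw [lt_inv_comm₀ hmpos (by linarith)]; linarith
        rw [inv_neg] at this
        linarith)
      exact ⟨_, h1⟩
  obtain ⟨Γ, δ, hδ, hΓs, hΓc, hΓi, hΓb, hΓδ⟩ := exists_gamma R hRs b m hb hmpos hspecR
  simp only [hRXx] at hΓc hΓi hΓb hΓδ
  obtain ⟨P, κ, C, hκ, hC, hP1, hP2, hP3⟩ := splitting W (T l b) X Γ hW hWd hTX hXT b m δ
    hmpos.le hδ (by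
      intro x
      have h1 := hlow b x
      have h2 : 0 ≤ (ν - t0) * ‖W x‖ ^ 2 := mul_nonneg (by linarith) (by positivity)
      rw [hm]
      nlinarith) hΓi hΓb hΓs hΓc hΓδ
  have hpb := fun t ht htb => perturbed_bddBelow W (T l b) P hW b κ C hκ hC hP1 hP2 hP3 t ht htb
  have he0 : ∀ μ, μ - l ≤ κ / (2 * (ℓ + 1)) → l ≤ μ → (μ - l) * ℓ ≤ κ / 2 := by
    intro μ h1 h2
    rw [le_div_iff₀ (by positivity)] at h1
    nlinarith
  obtain ⟨c, hc, hcb⟩ := hpb b hb le_rfl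
  refine ⟨κ / (2 * (ℓ + 1)), by positivity, ‖W‖ * (c⁻¹ * (ℓ * (‖X‖ * ‖W‖))), ?_⟩
  intro μ hμ hμe
  constructor
  · rw [Set.eq_empty_iff_forall_notMem]
    rintro t ⟨⟨ht, htb⟩, hts⟩
    obtain ⟨c', hc', hcb'⟩ := hpb t ht htb
    obtain ⟨X', h1, h2, -⟩ := exists_inv_of_bddBelow (T μ t) (hT μ hμ t) c' hc'
      (hcb' (L μ) (T μ t) (μ - l) ℓ (by linarith) (he0 μ hμe hμ) (hLnorm μ hμ) (hLpos μ hμ)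
        (hT μ hμ t) (hpert μ hμ b t))
    exact hts ⟨_, isResolventAt_of_inv W (T μ t) X' hW (hT μ hμ t) h1 h2 (S μ) (hS μ hμ) t
      (hlink μ hμ t)⟩
  · intro R1 R2 hR1 hR2
    obtain ⟨X', h1, h2, h3⟩ := exists_inv_of_bddBelow (T μ b) (hT μ hμ b) c hc
      (hcb (L μ) (T μ b) (μ - l) ℓ (by linarith) (he0 μ hμe hμ) (hLnorm μ hμ) (hLpos μ hμ)
        (hT μ hμ b) (hpert μ hμ b b))
    have hR2' := hR2.unique' (isResolventAt_of_inv W (T μ b) X' hW (hT μ hμ b) h1 h2 (S μ)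
      (hS μ hμ) b (hlink μ hμ b))
    have hR1' := hR1.unique' hR
    rw [hR1', hR2', hRX]
    have hdiff : ∀ y, X y = X' y - ((μ - l : ℝ) : ℂ) • X' (L μ (X y)) := by
      intro y
      have e1 := hpert μ hμ b b (X y)
      rw [hTX] at e1
      have e2 := h2 (X y)
      rw [e1] at e2
      simp only [sub_self, Complex.ofReal_zero, zero_smul, add_zero, map_sub, map_smul] at e2
      exact e2.symm
    apply ContinuousLinearMap.opNorm_le_bound
    · have : 0 ≤ μ - l := by linarith
      positivity
    intro y
    have e1 : (W ∘L X ∘L W - W ∘L X' ∘L W) y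
        = -(((μ - l : ℝ) : ℂ) • W (X' (L μ (X (W y))))) := by
      simp only [ContinuousLinearMap.sub_apply, ContinuousLinearMap.comp_apply]
      have := hdiff (W y)
      rw [← map_sub, ← map_smul, ← map_neg]
      congr 1
      conv_lhs => rw [this]
      abel
    rw [e1, norm_neg, norm_smul, Complex.norm_real, Real.norm_of_nonneg (by linarith)]
    have hml : 0 ≤ μ - l := by linarith
    calc (μ - l) * ‖W (X' (L μ (X (W y))))‖
        ≤ (μ - l) * (‖W‖ * (c⁻¹ * (ℓ * (‖X‖ * (‖W‖ * ‖y‖))))) := by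
          gcongr
          refine W.le_opNorm_of_le ?_
          refine (X'.le_opNorm_of_le ?_).trans (mul_le_mul_of_nonneg_right h3 (by positivity))
          refine ((L μ).le_opNorm_of_le ?_).trans
            (mul_le_mul_of_nonneg_right (hLnorm μ hμ) (by positivity))
          exact X.le_opNorm_of_le (W.le_opNorm y)
      _ = _ := by ring

theorem IsResolventAt.symm' {S : PMap H H} (hS : S.IsSelfAdjoint) {t : ℝ} {R : H →L[ℂ] H}
    (h : IsResolventAt S t R) (x y : H) : (⟪R x, y⟫ : ℂ) = ⟪x, R y⟫ := by
  obtain ⟨hx1, hx2⟩ := h.2 x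
  obtain ⟨hy1, hy2⟩ := h.2 y
  have hs := (hS.2 (R y) (S.toFun (R y))).2 ⟨hy1, rfl⟩ (R x) hx1
  conv_lhs => rw [← hy2]
  conv_rhs => rw [← hx2]
  rw [inner_sub_right, inner_sub_left, hs, inner_smul_left, inner_smul_right,
    Complex.conj_ofReal]

end helpers

/-- Lemma 4.6 of the paper.  Let `lam_m ∈ (d, λ_e)` be an eigenvalue
of `M`, let `b > 0` be such that `(0, b] ∩ Spec (S (lam_m)) = ∅`, and let `μ n ≥ lam_m`
with `ε n = μ n − lam_m → 0`.  Then for all sufficiently large `n`: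
`(0, b] ∩ Spec (S (μ n)) = ∅`, and `‖(S(lam_m) − b)⁻¹ − (S(μ n) − b)⁻¹‖ = O(ε n)`. -/
theorem statement12
    {H1 : Type*} [NormedAddCommGroup H1] [InnerProductSpace ℂ H1] [CompleteSpace H1]
    {H2 : Type*} [NormedAddCommGroup H2] [InnerProductSpace ℂ H2] [CompleteSpace H2]
    -- (i) `A` and `D` are self-adjoint on `H1` and `H2` respectively
    (A : PMap H1 H1) (hA : A.IsSelfAdjoint)
    (D : PMap H2 H2) (hD : D.IsSelfAdjoint)
    -- (ii) `A` bounded below, `D` bounded above with `d = max Spec D`,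
    -- `B` closed and densely defined from `H2` to `H1`
    (hAbelow : ∃ c : ℝ, ∀ x ∈ A.dom, c * ‖x‖ ^ 2 ≤ (⟪A.toFun x, x⟫ : ℂ).re)
    (d : ℝ) (hd : IsGreatest D.specR d)
    (hDabove : ∀ y ∈ D.dom, (⟪D.toFun y, y⟫ : ℂ).re ≤ d * ‖y‖ ^ 2)
    (B : PMap H2 H1)
    (hBclosed : IsClosed {p : H2 × H1 | p.1 ∈ B.dom ∧ p.2 = B.toFun p.1})
    (hBdense : Dense (B.dom : Set H2))
    -- `Bs` is the adjoint `B*` of `B`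
    (Bs : PMap H1 H2)
    (hBs : (∀ y : H1, y ∈ Bs.dom ↔ ∃ z : H2, ∀ x ∈ B.dom, ⟪B.toFun x, y⟫ = ⟪x, z⟫) ∧
      ∀ x ∈ B.dom, ∀ y ∈ Bs.dom, ⟪B.toFun x, y⟫ = ⟪x, Bs.toFun y⟫)
    -- `Fa = Dom(|A|^{1/2}) = Dom(𝔞)`, the domain of the closed form `fa = 𝔞` of `A`
    (Fa : Submodule ℂ H1) (fa : H1 → H1 → ℂ)
    (hAdomFa : (A.dom : Set H1) ⊆ Fa)
    (hfaHerm : ∀ x ∈ Fa, ∀ y ∈ Fa, fa x y = starRingEnd ℂ (fa y x))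
    (hfaA : ∀ x ∈ A.dom, ∀ y ∈ Fa, fa x y = ⟪A.toFun x, y⟫)
    -- (iii) `Dom(|A|^{1/2}) ⊆ Dom(B*)`, `Dom(B) ⊆ Dom(D)`, and `Dom(B)` is a core for `D`
    (hFaBs : (Fa : Set H1) ⊆ (Bs.dom : Set H1))
    (hBD : B.dom ≤ D.dom)
    (hBcore : ∀ y ∈ D.dom, ∀ δ : ℝ, 0 < δ →
      ∃ z ∈ B.dom, ‖z - y‖ < δ ∧ ‖D.toFun z - D.toFun y‖ < δ)
    -- `ν < min Spec A`, with `RA = (A − ν)⁻¹` and `G = cl((A − ν)⁻¹ B)` bounded,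
    -- and `RD z = (D − z)⁻¹` for `Re z > d`
    (ν : ℝ) (hν : ∃ c : ℝ, ν < c ∧ ∀ x ∈ A.dom, c * ‖x‖ ^ 2 ≤ (⟪A.toFun x, x⟫ : ℂ).re)
    (RA : H1 →L[ℂ] H1)
    (hRA : (∀ x ∈ A.dom, RA (A.toFun x - (ν : ℂ) • x) = x) ∧
      ∀ y : H1, RA y ∈ A.dom ∧ A.toFun (RA y) - (ν : ℂ) • RA y = y)
    (G : H2 →L[ℂ] H1) (hG : ∀ y ∈ B.dom, G y = RA (B.toFun y))
    (RD : ℂ → (H2 →L[ℂ] H2))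
    (hRD : ∀ z : ℂ, d < z.re →
      (∀ y ∈ D.dom, RD z (D.toFun y - z • y) = y) ∧
      ∀ w : H2, RD z w ∈ D.dom ∧ D.toFun (RD z w) - z • RD z w = w)
    -- `M` is the self-adjoint closure of `M₀`
    (M : PMap (WithLp 2 (H1 × H2)) (WithLp 2 (H1 × H2))) (hM : M.IsSelfAdjoint)
    (hMdom : ∀ (x : H1) (y : H2),
      (WithLp.equiv 2 (H1 × H2)).symm (x, y) ∈ M.dom ↔ y ∈ D.dom ∧ x + G y ∈ A.dom)
    (hMact : ∀ (x : H1) (y : H2),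
      (WithLp.equiv 2 (H1 × H2)).symm (x, y) ∈ M.dom → x ∈ Bs.dom →
      M.toFun ((WithLp.equiv 2 (H1 × H2)).symm (x, y)) =
        (WithLp.equiv 2 (H1 × H2)).symm
          (A.toFun (x + G y) - (ν : ℂ) • G y, Bs.toFun x + D.toFun y))
    -- the Schur complement `S μ` for real `μ > d`
    (S : ℝ → PMap H1 H1)
    (hSsa : ∀ μ : ℝ, d < μ → (S μ).IsSelfAdjoint)
    (hSdom : ∀ μ : ℝ, d < μ → ∀ x : H1,
      x ∈ (S μ).dom ↔ x ∈ Fa ∧ x - G (RD (μ : ℂ) (Bs.toFun x)) ∈ A.dom)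
    (hSact : ∀ μ : ℝ, d < μ → ∀ x ∈ (S μ).dom,
      (S μ).toFun x = A.toFun (x - G (RD (μ : ℂ) (Bs.toFun x)))
        - (ν : ℂ) • (x - G (RD (μ : ℂ) (Bs.toFun x))) + ((ν : ℂ) - (μ : ℂ)) • x)
    -- `lamE`: the interval `(d, lamE)` lies below the essential spectrum of `M`
    -- (`lamE = inf (Spec_ess M ∩ (d, ∞))`)
    (lamE : ℝ) (hlamE : ∀ t ∈ M.specEssR, d < t → lamE ≤ t)
    -- the constants `α, β ≥ 0` with `‖B* u‖² ≤ α 𝔞[u] + β ‖u‖²` on `Dom 𝔞`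
    (αc βc : ℝ) (hαc : 0 ≤ αc) (hβc : 0 ≤ βc)
    (hαβ : ∀ x ∈ Fa, ‖Bs.toFun x‖ ^ 2 ≤ αc * (fa x x).re + βc * ‖x‖ ^ 2)
    -- `lam_m` is an eigenvalue of `M` in `(d, λ_e)`
    (lam_m : ℝ) (hlam_m : lam_m ∈ Set.Ioo d lamE) (hlamEig : M.eigSp lam_m ≠ ⊥)
    (b : ℝ) (hb : 0 < b)
    (hbspec : Set.Ioc 0 b ∩ (S lam_m).specR = ∅)
    (μ : ℕ → ℝ) (hμge : ∀ n, lam_m ≤ μ n)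
    (ε : ℕ → ℝ) (hεdef : ∀ n, ε n = μ n - lam_m)
    (hε0 : Tendsto ε atTop (𝓝 0)) :
    ∃ (N : ℕ) (C : ℝ), ∀ n ≥ N,
      Set.Ioc 0 b ∩ (S (μ n)).specR = ∅ ∧
      ∀ R1 R2 : H1 →L[ℂ] H1, IsResolventAt (S lam_m) b R1 → IsResolventAt (S (μ n)) b R2 →
        ‖R1 - R2‖ ≤ C * ε n := by
  classical
  have hlam : d < lam_m := hlam_m.1
  obtain ⟨c, hνc, hc⟩ := hν
  have hRAr : IsResolventAt A ν RA := hRA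
  have hRAs := hRAr.symm' hA
  have hRApos : ∀ x, 0 ≤ (⟪RA x, x⟫ : ℂ).re := by
    intro x
    have h1 := hc (RA x) (hRA.2 x).1
    have h2 : (⟪RA x, x⟫ : ℂ).re = (⟪A.toFun (RA x), RA x⟫ : ℂ).re - ν * ‖RA x‖ ^ 2 := by
      have h3 : (⟪RA x, x⟫ : ℂ) = ⟪x, RA x⟫ := hRAs x x
      rw [h3]
      conv_lhs => arg 1; arg 2; rw [← (hRA.2 x).2]
      rw [inner_sub_left, inner_smul_left, Complex.conj_ofReal, Complex.sub_re,
        Complex.re_ofReal_mul, inner_self_eq_norm_sq_to_K]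
      norm_cast
    rw [h2]
    nlinarith [sq_nonneg ‖RA x‖]
  have hRAnn : 0 ≤ RA := by
    rw [ContinuousLinearMap.nonneg_iff_isPositive, ContinuousLinearMap.isPositive_def]
    exact ⟨fun x y => hRAs x y, hRApos⟩
  obtain ⟨W, hWW, hWs⟩ : ∃ W : H1 →L[ℂ] H1, (∀ x, W (W x) = RA x) ∧
      ∀ x y, (⟪W x, y⟫ : ℂ) = ⟪x, W y⟫ := by
    refine ⟨CFC.sqrt RA, fun x => ?_, fun x y => ?_⟩
    · exact congrArg (fun f : H1 →L[ℂ] H1 => f x) (CFC.sqrt_mul_sqrt_self RA hRAnn)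
    · exact ContinuousLinearMap.isSelfAdjoint_iff_isSymmetric.1
        (CFC.sqrt_nonneg RA).isSelfAdjoint x y
  have hWd : DenseRange W := by
    refine hA.1.mono ?_
    intro x hx
    refine ⟨W (A.toFun x - (ν : ℂ) • x), ?_⟩
    rw [hWW, hRA.1 x hx]
  have hBsA : ∀ x ∈ A.dom, x ∈ Bs.dom := fun x hx => hFaBs (hAdomFa hx)
  have hG1 : ∀ x ∈ B.dom, ∀ h, (⟪G x, h⟫ : ℂ) = ⟪B.toFun x, RA h⟫ := by
    intro x hx h
    rw [hG x hx, hRAs]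
  have hext : ∀ p q : H2, (∀ x ∈ B.dom, (⟪x, p⟫ : ℂ) = ⟪x, q⟫) → p = q := by
    intro p q h
    have h1 : ∀ x : H2, (⟪x, p⟫ : ℂ) = ⟪x, q⟫ := by
      intro x
      have hcl : IsClosed {x : H2 | (⟪x, p⟫ : ℂ) = ⟪x, q⟫} :=
        isClosed_eq (by fun_prop) (by fun_prop)
      exact hcl.closure_subset_iff.2 (fun y hy => h y hy) (hBdense x)
    exact ext_inner_left ℂ h1
  have hGadj : ∀ h, ContinuousLinearMap.adjoint G h = Bs.toFun (RA h) := by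
    intro h
    apply hext
    intro x hx
    rw [ContinuousLinearMap.adjoint_inner_right, hG1 x hx, hBs.2 x hx _ (hBsA _ (hRA.2 h).1)]
  have hGbd : ∃ C, ∀ h, ‖ContinuousLinearMap.adjoint G h‖ ≤ C * ‖W h‖ := by
    refine ⟨Real.sqrt (αc + |αc * ν + βc| * ‖W‖ ^ 2), fun h => ?_⟩
    have hu := (hRA.2 h).1
    have h1 := hαβ (RA h) (hAdomFa hu)
    rw [hfaA _ hu _ (hAdomFa hu)] at h1
    have h2 : (⟪A.toFun (RA h), RA h⟫ : ℂ).re = ‖W h‖ ^ 2 + ν * ‖RA h‖ ^ 2 := by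
      have e1 : A.toFun (RA h) = h + (ν : ℂ) • RA h := by
        rw [← sub_eq_iff_eq_add]; exact (hRA.2 h).2
      have e2 : (⟪h, RA h⟫ : ℂ) = ⟪W h, W h⟫ := by rw [← hWW, hWs]
      rw [e1, inner_add_left, inner_smul_left, e2, Complex.conj_ofReal, Complex.add_re,
        Complex.re_ofReal_mul, inner_self_eq_norm_sq_to_K, inner_self_eq_norm_sq_to_K]
      norm_cast
    have h3 : ‖RA h‖ ^ 2 ≤ ‖W‖ ^ 2 * ‖W h‖ ^ 2 := by
      rw [← hWW, ← mul_pow]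
      gcongr
      exact W.le_opNorm _
    rw [h2] at h1
    have h4 : (αc * ν + βc) * ‖RA h‖ ^ 2 ≤ |αc * ν + βc| * (‖W‖ ^ 2 * ‖W h‖ ^ 2) := by
      calc _ ≤ |αc * ν + βc| * ‖RA h‖ ^ 2 := by gcongr; exact le_abs_self _
        _ ≤ _ := by gcongr
    rw [hGadj]
    refine (sq_le_sq₀ (norm_nonneg _) (by positivity)).1 ?_
    rw [mul_pow, Real.sq_sqrt (by positivity)]
    nlinarith
  obtain ⟨V, hVW⟩ : ∃ V : H1 →L[ℂ] H2, ∀ h, V (W h) = ContinuousLinearMap.adjoint G h := by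
    refine ⟨LinearMap.extendOfNorm (ContinuousLinearMap.adjoint G : H1 →ₗ[ℂ] H2)
      (W : H1 →ₗ[ℂ] H1), fun h => ?_⟩
    exact LinearMap.extendOfNorm_eq (f := (ContinuousLinearMap.adjoint G : H1 →ₗ[ℂ] H2))
      (e := (W : H1 →ₗ[ℂ] H1)) hWd hGbd h
  set K : H2 →L[ℂ] H1 := ContinuousLinearMap.adjoint V with hK
  have hKV : ∀ w x, (⟪K w, x⟫ : ℂ) = ⟪w, V x⟫ := fun w x =>
    ContinuousLinearMap.adjoint_inner_left V x w
  have hVK : ∀ x w, (⟪V x, w⟫ : ℂ) = ⟪x, K w⟫ := fun x w =>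
    (ContinuousLinearMap.adjoint_inner_right V x w).symm
  have hWK : ∀ w, W (K w) = G w := by
    intro w
    apply ext_inner_right ℂ
    intro h
    rw [hWs, hKV, hVW, ContinuousLinearMap.adjoint_inner_right]
  have hBsW : ∀ ξ, W ξ ∈ Bs.dom ∧ Bs.toFun (W ξ) = V ξ := by
    intro ξ
    have h1 : ∀ x ∈ B.dom, (⟪B.toFun x, W ξ⟫ : ℂ) = ⟪x, V ξ⟫ := by
      intro x hx
      refine hWd.induction_on (p := fun ξ => (⟪B.toFun x, W ξ⟫ : ℂ) = ⟪x, V ξ⟫) ξ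
        (isClosed_eq (by fun_prop) (by fun_prop)) ?_
      intro h
      rw [hWW, hVW, ← hG1 x hx, ContinuousLinearMap.adjoint_inner_right]
    have h2 : W ξ ∈ Bs.dom := (hBs.1 _).2 ⟨V ξ, h1⟩
    refine ⟨h2, hext _ _ fun x hx => ?_⟩
    rw [← hBs.2 x hx _ h2, h1 x hx]
  -- the resolvent of `D`
  have hRDr : ∀ s : ℝ, d < s → IsResolventAt D s (RD (s : ℂ)) := fun s hs =>
    hRD (s : ℂ) (by simpa using hs)
  have hRDs : ∀ s : ℝ, d < s → ∀ x y, (⟪RD (s : ℂ) x, y⟫ : ℂ) = ⟪x, RD (s : ℂ) y⟫ :=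
    fun s hs => (hRDr s hs).symm' hD
  have hRDneg : ∀ s : ℝ, d < s → ∀ w,
      (⟪RD (s : ℂ) w, w⟫ : ℂ).re ≤ -(s - d) * ‖RD (s : ℂ) w‖ ^ 2 := by
    intro s hs w
    have h1 := hDabove _ ((hRDr s hs).2 w).1
    have h2 : (⟪RD (s : ℂ) w, w⟫ : ℂ).re
        = (⟪D.toFun (RD (s : ℂ) w), RD (s : ℂ) w⟫ : ℂ).re - s * ‖RD (s : ℂ) w‖ ^ 2 := by
      rw [hRDs s hs w w]
      conv_lhs => arg 1; arg 2; rw [← ((hRDr s hs).2 w).2]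
      rw [inner_sub_left, inner_smul_left, Complex.conj_ofReal, Complex.sub_re,
        Complex.re_ofReal_mul, inner_self_eq_norm_sq_to_K]
      norm_cast
    rw [h2]
    linarith
  have hRDnp : ∀ s : ℝ, d < s → ∀ w, (⟪RD (s : ℂ) w, w⟫ : ℂ).re ≤ 0 := by
    intro s hs w
    have h1 := hRDneg s hs w
    have h2 : 0 ≤ (s - d) * ‖RD (s : ℂ) w‖ ^ 2 := mul_nonneg (by linarith) (by positivity)
    linarith
  have hRDnorm : ∀ s : ℝ, lam_m ≤ s → ‖RD (s : ℂ)‖ ≤ (lam_m - d)⁻¹ := by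
    intro s hs
    have hp : 0 < lam_m - d := by linarith
    apply ContinuousLinearMap.opNorm_le_bound _ (by positivity)
    intro w
    have h1 := hRDneg s (by linarith) w
    have h2 := (Complex.abs_re_le_norm _).trans
      (norm_inner_le_norm (𝕜 := ℂ) (RD (s : ℂ) w) w)
    have h3 := neg_abs_le (⟪RD (s : ℂ) w, w⟫ : ℂ).re
    rw [inv_mul_eq_div, le_div_iff₀ hp]
    rcases eq_or_lt_of_le (norm_nonneg (RD (s : ℂ) w)) with h0 | h0
    · rw [← h0]; simp
    · have h4 : (lam_m - d) * ‖RD (s : ℂ) w‖ ^ 2 ≤ (s - d) * ‖RD (s : ℂ) w‖ ^ 2 := by gcongr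
      refine le_of_mul_le_mul_right (a := ‖RD (s : ℂ) w‖) ?_ h0
      nlinarith
  -- the bounded operators
  set T : ℝ → ℝ → H1 →L[ℂ] H1 := fun s t => ContinuousLinearMap.id ℂ H1
    - K ∘L RD (s : ℂ) ∘L V + ((ν - s - t : ℝ) : ℂ) • (W ∘L W) with hTdef
  have hTx : ∀ s t x, T s t x = x - K (RD (s : ℂ) (V x)) + ((ν - s - t : ℝ) : ℂ) • W (W x) :=
    fun s t x => rfl
  set L : ℝ → H1 →L[ℂ] H1 := fun s => K ∘L RD (s : ℂ) ∘L RD (lam_m : ℂ) ∘L V + W ∘L W with hLdef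
  have hLx : ∀ s x, L s x = K (RD (s : ℂ) (RD (lam_m : ℂ) (V x))) + W (W x) := fun s x => rfl
  obtain ⟨e0, he0, C, hC⟩ := abstract_main W hWs hWd S T L lam_m b
    (‖K‖ * ((lam_m - d)⁻¹ * (‖RD (lam_m : ℂ)‖ * ‖V‖)) + ‖W‖ * ‖W‖) (ν - lam_m) hb
    (by
      have : 0 < lam_m - d := by linarith
      positivity)
    (fun s hs => hSsa s (by linarith))
    (by
      intro s hs t x y
      rw [hTx, hTx, inner_add_left, inner_sub_left, inner_add_right, inner_sub_right,
        inner_smul_left, inner_smul_right, Complex.conj_ofReal, hWs (W x) y, hWs x (W y),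
        hKV, hRDs s (by linarith), hVK])
    (by
      intro s hs t x hx
      have hds : d < s := by linarith
      have hact := hSact s hds x hx
      obtain ⟨hxF, hxA⟩ := (hSdom s hds x).1 hx
      set u := x - G (RD (s : ℂ) (Bs.toFun x)) with hu
      set h := A.toFun u - (ν : ℂ) • u with hh
      have hRAh : RA h = u := hRA.1 u hxA
      have hxW : x = W (W h + K (RD (s : ℂ) (Bs.toFun x))) := by
        rw [map_add, hWW, hWK, hRAh, hu]; abel
      refine ⟨_, hxW, ?_⟩
      have hBsx := (hBsW (W h + K (RD (s : ℂ) (Bs.toFun x)))).2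
      rw [← hxW] at hBsx
      clear_value h
      rw [hTx, ← hBsx, ← hxW, hact, map_sub, map_add, map_smul, map_smul]
      push_cast
      module)
    (by
      intro s hs r t x
      have hid := (hRDr s (by linarith)).identity (hRDr lam_m hlam) (V x)
      rw [hTx, hTx, hLx]
      generalize RD (s : ℂ) (RD (lam_m : ℂ) (V x)) = q at hid ⊢
      rw [hid, map_add, map_smul]
      push_cast
      module)
    (by
      intro s hs x
      rw [hLx, inner_add_left, hKV, hWs, Complex.add_re]
      have hds : d < s := by linarith
      set w := V x with hw
      set a := RD (s : ℂ) w with ha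
      have hid := (hRDr lam_m hlam).identity (hRDr s hds) w
      have e1 : RD (lam_m : ℂ) w = a - ((s - lam_m : ℝ) : ℂ) • RD (lam_m : ℂ) a := by
        rw [eq_sub_iff_add_eq]; exact hid.symm
      have e2 : (⟪RD (s : ℂ) (RD (lam_m : ℂ) w), w⟫ : ℂ).re
          = ‖a‖ ^ 2 - (s - lam_m) * (⟪RD (lam_m : ℂ) a, a⟫ : ℂ).re := by
        rw [hRDs s hds, ← ha, e1, inner_sub_left, inner_smul_left, Complex.conj_ofReal,
          Complex.sub_re, Complex.re_ofReal_mul, inner_self_eq_norm_sq_to_K]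
        norm_cast
      have e3 := mul_nonneg (sub_nonneg.2 hs) (neg_nonneg.2 (hRDnp lam_m hlam a))
      have e4 : 0 ≤ (⟪W x, W x⟫ : ℂ).re := inner_self_nonneg (𝕜 := ℂ)
      rw [e2]
      nlinarith [sq_nonneg ‖a‖])
    (by
      intro s hs
      refine (norm_add_le _ _).trans (add_le_add ?_ (ContinuousLinearMap.opNorm_comp_le _ _))
      refine (ContinuousLinearMap.opNorm_comp_le _ _).trans ?_
      gcongr
      refine (ContinuousLinearMap.opNorm_comp_le _ _).trans ?_
      have := hRDnorm s hs
      gcongr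
      exact ContinuousLinearMap.opNorm_comp_le _ _)
    (by
      intro t x
      rw [hTx, inner_add_left, inner_sub_left, inner_smul_left, Complex.conj_ofReal, hKV,
        hWs (W x) x, Complex.add_re, Complex.sub_re, Complex.re_ofReal_mul]
      have e1 := hRDnp lam_m hlam (V x)
      have e2 : (⟪W x, W x⟫ : ℂ).re = ‖W x‖ ^ 2 := (norm_sq_eq_re_inner (𝕜 := ℂ) (W x)).symm
      have e3 : (⟪x, x⟫ : ℂ).re = ‖x‖ ^ 2 := (norm_sq_eq_re_inner (𝕜 := ℂ) x).symm
      rw [e2, e3]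
      linarith)
    hbspec
  obtain ⟨N, hN⟩ := eventually_atTop.1 (hε0.eventually (ge_mem_nhds he0))
  refine ⟨N, C, fun n hn => ?_⟩
  have h1 := hN n hn
  rw [hεdef] at h1 ⊢
  exact hC (μ n) (hμge n) h1
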